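/- For every rational r with 4 < r < 5, the open r-capacity of the g-edge P*₁₀(u,v), obtained from the Petersen graph by deleting one edge uv, equals the open interval (4, r−4) of ℝ/rℤ. -/

import Mathlib

open Finset


open Finset

/-- A finite multigraph given with a reference orientation: each edge `e` goes
from `src e` to `tgt e`.  An orientation of the graph is a sign function
`σ : E → ℤˣ` telling, for each edge, whether it keeps (`1`) or reverses (`-1`)
its reference direction. -/
structure Multigraph where
  V : Type
  E : Type
  [fintV : Fintype V]
  [fintE : Fintype E]
  [decV : DecidableEq V]
  [decE : DecidableEq E]
  src : E → V
  tgt : E → V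

attribute [instance] Multigraph.fintV Multigraph.fintE Multigraph.decV Multigraph.decE

/-- `f` is a flow with respect to the reference orientation: at every vertex the
sum over outgoing edges equals the sum over incoming edges. -/
def Multigraph.IsFlow (G : Multigraph) {M : Type*} [AddCommMonoid M] (f : G.E → M) : Prop :=
  ∀ v : G.V,
    ∑ e ∈ Finset.univ.filter (fun e => G.src e = v), f e =
    ∑ e ∈ Finset.univ.filter (fun e => G.tgt e = v), f e

/-- `f` is a flow on the orientation `σ` of `G` (values of `f` are read in the
direction given by `σ`). -/
def Multigraph.IsFlowOn (G : Multigraph) {M : Type*} [AddCommGroup M]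
    (σ : G.E → ℤˣ) (f : G.E → M) : Prop :=
  G.IsFlow (fun e => ((σ e : ℤ) • f e))

/-- The open interval `(a,b)` of `ℝ/rℤ`: the points traversed strictly clockwise
from `a` to `b`, with the convention `(a,a) = ℝ/rℤ \ {a}`. -/
noncomputable def openArc (r a b : ℝ) : Set (AddCircle r) :=
  (fun t : ℝ => (t : AddCircle r)) '' Set.Ioo a (a + (r - Int.fract ((a - b) / r) * r))

/-- The closed interval `[a,b]` of `ℝ/rℤ`: the points traversed clockwise from
`a` to `b`, endpoints included, with the convention `[a,a] = {a}`. -/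
noncomputable def closedArc (r a b : ℝ) : Set (AddCircle r) :=
  (fun t : ℝ => (t : AddCircle r)) '' Set.Icc a (a + Int.fract ((b - a) / r) * r)

/-- `G` has a circular nowhere-zero `r`-flow: an orientation together with a
real-valued flow all of whose values lie in `[1, r-1]`. -/
def Multigraph.HasCNZF (G : Multigraph) (r : ℝ) : Prop :=
  ∃ (σ : G.E → ℤˣ) (f : G.E → ℝ), G.IsFlowOn σ f ∧ ∀ e, f e ∈ Set.Icc (1:ℝ) (r - 1)

/-- The circular flow number of `G`, as an extended real (`⊤` if `G` admits no
circular nowhere-zero `r`-flow for any `r`, e.g. if `G` has a bridge). -/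
noncomputable def circFlowNumber (G : Multigraph) : EReal :=
  sInf {x : EReal | ∃ r : ℝ, x = (r : EReal) ∧ G.HasCNZF r}

/-- The graph `G ∪ e₀` obtained from `G` by adding one extra edge `e₀ = none`
joining `u` to `v`. -/
def Multigraph.addEdge (G : Multigraph) (u v : G.V) : Multigraph where
  V := G.V
  E := Option G.E
  src := fun e => e.elim u G.src
  tgt := fun e => e.elim v G.tgt

/-- The capacity of the capacitated g-edge `(G, cap)` with terminals `u,v`:
all values `f e₀` of modular flows `f` on `G ∪ e₀` (over all orientations) whose
value on each edge `e` of `G` lies in the prescribed set `cap e`. -/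
def CPcap (r : ℝ) (G : Multigraph) (cap : G.E → Set (AddCircle r)) (u v : G.V) :
    Set (AddCircle r) :=
  {t | ∃ (σ : Option G.E → ℤˣ) (f : Option G.E → AddCircle r),
        (G.addEdge u v).IsFlowOn σ f ∧ (∀ e : G.E, f (some e) ∈ cap e) ∧ f none = t}

/-- The open `r`-capacity `CP_r(G_{u,v})` of the g-edge `G_{u,v}`. -/
noncomputable def CP (r : ℝ) (G : Multigraph) (u v : G.V) : Set (AddCircle r) :=
  CPcap r G (fun _ => openArc r 1 (r - 1)) u v

/-- A capacitated graph `(G, cap)` admits a flow respecting all capacities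
(for `cap e = (1,4) ⊆ ℝ/5ℤ` everywhere this is a sub-5-MCNZF). -/
def HasCapFlow (r : ℝ) (G : Multigraph) (cap : G.E → Set (AddCircle r)) : Prop :=
  ∃ (σ : G.E → ℤˣ) (f : G.E → AddCircle r), G.IsFlowOn σ f ∧ ∀ e, f e ∈ cap e

/-- Deletion of the edge `e₀`. -/
def Multigraph.deleteEdge (G : Multigraph) (e₀ : G.E) : Multigraph where
  V := G.V
  E := {e : G.E // e ≠ e₀}
  src := fun e => G.src e.1
  tgt := fun e => G.tgt e.1

/-- Degree of a vertex (loops count twice). -/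
def Multigraph.degree (G : Multigraph) (v : G.V) : ℕ :=
  (Finset.univ.filter (fun e => G.src e = v)).card +
  (Finset.univ.filter (fun e => G.tgt e = v)).card

/-- The tail of edge `e` in the orientation `σ`. -/
def Multigraph.osrc (G : Multigraph) (σ : G.E → ℤˣ) (e : G.E) : G.V :=
  if σ e = 1 then G.src e else G.tgt e

/-- The head of edge `e` in the orientation `σ`. -/
def Multigraph.otgt (G : Multigraph) (σ : G.E → ℤˣ) (e : G.E) : G.V :=
  if σ e = 1 then G.tgt e else G.src e

/-- An injective key used to pick one reference direction for each edge of the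
Petersen graph. -/
def pkey (s : Finset (Fin 5)) : ℕ := ∑ i ∈ s, 2 ^ (i : ℕ)

/-- The Petersen graph: the Kneser graph on the 2-element subsets of a 5-element
set, two subsets adjacent when disjoint (each edge listed once, in the direction
of increasing key). -/
def petersen : Multigraph where
  V := {s : Finset (Fin 5) // s.card = 2}
  E := {p : {s : Finset (Fin 5) // s.card = 2} × {s : Finset (Fin 5) // s.card = 2} //
          Disjoint p.1.1 p.2.1 ∧ pkey p.1.1 < pkey p.2.1}
  src := fun p => p.1.1
  tgt := fun p => p.1.2


/-!
Measure `z : ℝ/rℤ` by its distance `‖z‖` to `0`: the arc `(1, r - 1)` is `1 < ‖z‖`, and for `r ≤ 8`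
the arc `(4, r - 4)` is the ball `‖z‖ < r - 4`, so only norms matter, not orientations.

Write the values of a nowhere-zero flow modulo `r` on a cubic graph as `r / 2 + d` with
`|d| = r / 2 - ‖z‖`, antisymmetrically in the direction of the edge. Conservation modulo `r` forces
the real net outflow of `d` at each vertex to be `r / 2` or `-(r / 2)`, so the vertices split into
equally many sources and sinks, and a set of `k` sources (or sinks) whose boundary has `m` edges
satisfies `∑ ‖z‖ ≤ (m - k) * r / 2` over its boundary. In the Petersen graph every bisection has
on one of its sides a path with three vertices, whose boundary has five edges: the five norms add
up to at most `r ≤ 5`. As all norms off `uv` exceed `1`, the edge `uv` is one of the five and its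
norm is less than `r - 4`.

Conversely, `‖z‖ < r - 4` is attained by a flow that is constant on the classes of edges given by
the distances to `u` and `v`.
-/

/-! ### The norm of `ℝ/rℤ` -/

section AddCircle

variable {r : ℝ}

theorem exists_coe_eq_and_abs_eq_norm (z : AddCircle r) :
    ∃ t : ℝ, (t : AddCircle r) = z ∧ |t| = ‖z‖ := by
  induction z using QuotientAddGroup.induction_on with | H x => ?_
  refine ⟨x - round (r⁻¹ * x) * r, ?_, (AddCircle.norm_eq r).symm⟩
  rw [AddCircle.coe_sub, sub_eq_self, AddCircle.coe_eq_zero_iff]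
  exact ⟨round (r⁻¹ * x), zsmul_eq_mul _ _⟩

theorem exists_coe_half_add_eq (hr : 0 < r) (z : AddCircle r) :
    ∃ d : ℝ, ((r / 2 + d : ℝ) : AddCircle r) = z ∧ |d| = r / 2 - ‖z‖ := by
  obtain ⟨t, rfl, ht⟩ := exists_coe_eq_and_abs_eq_norm z
  have hle : |t| ≤ r / 2 := by
    simpa [ht, abs_of_pos hr] using AddCircle.norm_le_half_period r (x := (t : AddCircle r)) hr.ne'
  rw [← ht]
  rcases le_total 0 t with h | h
  · rw [abs_of_nonneg h] at hle ⊢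
    exact ⟨t - r / 2, by ring_nf, by rw [abs_of_nonpos (by linarith)]; ring⟩
  · rw [abs_of_nonpos h] at hle ⊢
    refine ⟨t + r / 2, ?_, by rw [abs_of_nonneg (by linarith)]; ring⟩
    rw [show r / 2 + (t + r / 2) = t + r by ring, AddCircle.coe_add_period]

theorem lt_norm_coe {c x : ℝ} (hx : x ∈ Set.Ioo c (r - c)) : c < ‖(x : AddCircle r)‖ := by
  have hhalf : ‖((x - r / 2 : ℝ) : AddCircle r)‖ < r / 2 - c :=
    QuotientAddGroup.norm_mk_le_norm.trans_lt (abs_lt.2 ⟨by linarith [hx.1], by linarith [hx.2]⟩)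
  have htri := norm_sub_le (x : AddCircle r) ((x - r / 2 : ℝ) : AddCircle r)
  rw [← AddCircle.coe_sub, sub_sub_cancel, AddCircle.norm_half_period_eq] at htri
  linarith [le_abs_self r]

theorem openArc_eq_setOf_lt_norm {c : ℝ} (hc : 0 ≤ c) (hcr : 2 * c < r) :
    openArc r c (r - c) = {z | c < ‖z‖} := by
  have hr : 0 < r := by linarith
  have hfract : Int.fract ((c - (r - c)) / r) = 2 * c / r :=
    Int.fract_eq_iff.2 ⟨by positivity, (div_lt_one hr).2 hcr, -1, by field_simp; push_cast; ring⟩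
  have harc : openArc r c (r - c) = (fun t : ℝ => (t : AddCircle r)) '' Set.Ioo c (r - c) := by
    rw [openArc, hfract, div_mul_cancel₀ _ hr.ne']
    ring_nf
  rw [harc]
  ext z
  constructor
  · rintro ⟨x, hx, rfl⟩
    exact lt_norm_coe hx
  · intro hz
    obtain ⟨d, hdz, hd⟩ := exists_coe_half_add_eq hr z
    have hlt : |d| < r / 2 - c := by rw [hd]; linarith [hz.out]
    exact ⟨r / 2 + d, ⟨by linarith [(abs_lt.1 hlt).1], by linarith [(abs_lt.1 hlt).2]⟩, hdz⟩

theorem openArc_eq_ball {c : ℝ} (hrc : r ≤ 2 * c) (hcr : c < r) :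
    openArc r c (r - c) = Metric.ball 0 (r - c) := by
  have hr : 0 < r := by linarith
  have hfract : Int.fract ((c - (r - c)) / r) = (2 * c - r) / r :=
    Int.fract_eq_iff.2 ⟨div_nonneg (by linarith) hr.le, (div_lt_one hr).2 (by linarith), 0,
      by field_simp; push_cast; ring⟩
  rw [openArc, hfract, div_mul_cancel₀ _ hr.ne']
  ext z
  rw [mem_ball_zero_iff]
  constructor
  · rintro ⟨x, hx, rfl⟩
    have hlt : |x - r| < r - c := abs_lt.2 ⟨by linarith [hx.1], by linarith [hx.2]⟩
    change ‖(x : AddCircle r)‖ < r - c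
    rw [← sub_add_cancel x r, AddCircle.coe_add_period]
    exact QuotientAddGroup.norm_mk_le_norm.trans_lt hlt
  · intro hz
    obtain ⟨t, rfl, ht⟩ := exists_coe_eq_and_abs_eq_norm z
    rw [← ht, abs_lt] at hz
    exact ⟨t + r, ⟨by linarith, by linarith⟩, AddCircle.coe_add_period _ _⟩

end AddCircle

/-! ### Circulations on simple graphs -/

section Circulation

variable {V M : Type*} [Fintype V] [AddCommGroup M] {H : SimpleGraph V} [DecidableRel H.Adj]

/-- `φ` is an `M`-valued flow on the simple graph `H`, with `φ v w` read from `v` to `w`; the values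
on non-adjacent pairs are irrelevant. -/
structure IsCirculation (H : SimpleGraph V) [DecidableRel H.Adj] (φ : V → V → M) : Prop where
  antisymm : ∀ ⦃v w⦄, H.Adj v w → φ w v = -φ v w
  sum_neighborFinset : ∀ v, ∑ w ∈ H.neighborFinset v, φ v w = 0

theorem sum_sum_neighborFinset_eq_sum_interedges_compl [DecidableEq V] {D : V → V → M}
    (hD : ∀ ⦃v w⦄, H.Adj v w → D w v = -D v w) (X : Finset V) :
    ∑ v ∈ X, ∑ w ∈ H.neighborFinset v, D v w = ∑ p ∈ H.interedges X Xᶜ, D p.1 p.2 := by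
  have hinside : ∑ p ∈ H.interedges X X, D p.1 p.2 = 0 := by
    refine Finset.sum_involution (fun p _ => p.swap) ?_ ?_ ?_ fun p _ => p.swap_swap
    · rintro ⟨v, w⟩ hp
      rw [Prod.swap_prod_mk, hD (H.mem_interedges_iff.1 hp).2.2, add_neg_cancel]
    · rintro ⟨v, w⟩ hp - heq
      exact (H.mem_interedges_iff.1 hp).2.2.ne (Prod.ext_iff.1 heq).2
    · rintro ⟨v, w⟩ hp
      obtain ⟨hv, hw, hvw⟩ := H.mem_interedges_iff.1 hp
      exact H.mem_interedges_iff.2 ⟨hw, hv, hvw.symm⟩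
  have hsum (Y : Finset V) :
      ∑ p ∈ H.interedges X Y, D p.1 p.2 = ∑ v ∈ X, ∑ w ∈ Y with H.Adj v w, D v w := by
    simp only [SimpleGraph.interedges, Rel.interedges, Finset.sum_filter, Finset.sum_product]
  rw [hsum, ← add_zero (∑ v ∈ X, ∑ w ∈ Xᶜ with H.Adj v w, D v w), ← hinside, hsum,
    ← Finset.sum_add_distrib]
  simp only [SimpleGraph.neighborFinset_eq_filter, Finset.sum_filter, Finset.sum_compl_add_sum]

theorem isCirculation_of_quotientMatrix {ι : Type*} [Fintype ι] [DecidableEq ι] {τ : V → ι}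
    {B : ι → ι → ℕ} {q : ι → ι → M}
    (hB : ∀ v j, #{w ∈ H.neighborFinset v | τ w = j} = B (τ v) j)
    (hq : ∀ i j, q j i = -q i j) (hsum : ∀ i, ∑ j, B i j • q i j = 0) :
    IsCirculation H fun v w => q (τ v) (τ w) where
  antisymm _ _ _ := hq _ _
  sum_neighborFinset v := by
    rw [← Finset.sum_fiberwise (H.neighborFinset v) τ, ← hsum (τ v)]
    refine Finset.sum_congr rfl fun j _ => ?_
    rw [← hB, Finset.sum_congr rfl fun w hw => by rw [(Finset.mem_filter.1 hw).2],
      Finset.sum_const]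

theorem exists_bisection_card_mul_le_sum_abs [DecidableEq V] {c : ℝ} (hc : 0 < c) {D : V → V → ℝ}
    (hD : ∀ ⦃v w⦄, H.Adj v w → D w v = -D v w)
    (hdiv : ∀ v, ∑ w ∈ H.neighborFinset v, D v w = c ∨ ∑ w ∈ H.neighborFinset v, D v w = -c) :
    ∃ S : Finset V, #S = #Sᶜ ∧ ∀ X, X ⊆ S ∨ X ⊆ Sᶜ →
      #X * c ≤ ∑ p ∈ H.interedges X Xᶜ, |D p.1 p.2| := by
  set div : V → ℝ := fun v => ∑ w ∈ H.neighborFinset v, D v w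
  have hcut (X : Finset V) : ∑ v ∈ X, div v = ∑ p ∈ H.interedges X Xᶜ, D p.1 p.2 :=
    sum_sum_neighborFinset_eq_sum_interedges_compl hD X
  let S : Finset V := {v | div v = c}
  have hsource {X} (hX : X ⊆ S) : ∑ v ∈ X, div v = #X * c := by
    rw [Finset.sum_congr rfl fun v hv => (Finset.mem_filter.1 (hX hv)).2, Finset.sum_const,
      nsmul_eq_mul]
  have hsink {X} (hX : X ⊆ Sᶜ) : ∑ v ∈ X, div v = -(#X * c) := by
    have hneg (v : V) (hv : v ∈ X) : div v = -c :=
      (hdiv v).resolve_left fun h =>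
        Finset.mem_compl.1 (hX hv) (Finset.mem_filter.2 ⟨Finset.mem_univ v, h⟩)
    rw [Finset.sum_congr rfl hneg, Finset.sum_const, nsmul_eq_mul, mul_neg]
  refine ⟨S, ?_, fun X hX => ?_⟩
  · have htotal : #S * c - #Sᶜ * c = 0 := by
      rw [sub_eq_add_neg, ← hsource subset_rfl, ← hsink subset_rfl, Finset.sum_add_sum_compl, hcut]
      simp [SimpleGraph.interedges, Rel.interedges]
    exact_mod_cast mul_right_cancel₀ hc.ne' (sub_eq_zero.1 htotal)
  · calc #X * c = |∑ v ∈ X, div v| := by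
          rcases hX with hX | hX
          · rw [hsource hX, abs_of_nonneg (by positivity)]
          · rw [hsink hX, abs_neg, abs_of_nonneg (by positivity)]
      _ ≤ ∑ p ∈ H.interedges X Xᶜ, |D p.1 p.2| := by
          rw [hcut]
          exact Finset.abs_sum_le_sum_abs _ _

end Circulation

section ModularFlow

variable {V : Type*} {H : SimpleGraph V} {r : ℝ} {φ : V → V → AddCircle r}

theorem exists_antisymm_lift (hr : 0 < r) (hφ : ∀ ⦃v w⦄, H.Adj v w → φ w v = -φ v w)
    (hne : ∀ ⦃v w⦄, H.Adj v w → φ v w ≠ 0) :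
    ∃ D : V → V → ℝ, (∀ ⦃v w⦄, H.Adj v w → D w v = -D v w) ∧
      (∀ v w, ((r / 2 + D v w : ℝ) : AddCircle r) = φ v w) ∧
      ∀ v w, |D v w| = r / 2 - ‖φ v w‖ := by
  choose D hDφ hD using fun v w => exists_coe_half_add_eq hr (φ v w)
  refine ⟨D, fun v w hvw => ?_, hDφ, hD⟩
  have hlt {v w} (h : H.Adj v w) : |D v w| < r / 2 := by
    rw [hD]; linarith [norm_pos_iff.2 (hne h)]
  have hcoe : ((D v w + D w v : ℝ) : AddCircle r) = 0 := by
    have h := hφ hvw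
    rw [← hDφ, ← hDφ v, eq_neg_iff_add_eq_zero, ← AddCircle.coe_add,
      show r / 2 + D w v + (r / 2 + D v w) = D v w + D w v + r by ring,
      AddCircle.coe_add_period] at h
    exact h
  obtain ⟨n, hn⟩ := (AddCircle.coe_eq_zero_iff r).1 hcoe
  have habs : |(n : ℝ)| * r < 1 * r := by
    rw [← abs_of_pos hr, ← abs_mul, ← zsmul_eq_mul, hn, abs_of_pos hr]
    linarith [abs_add_le (D v w) (D w v), hlt hvw, hlt hvw.symm]
  have hn0 : n = 0 := Int.abs_lt_one_iff.1 (by exact_mod_cast lt_of_mul_lt_mul_right habs hr.le)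
  rw [hn0, zero_smul] at hn
  linarith

theorem sum_eq_or_sum_eq_neg_of_card_eq_three {ι : Type*} {s : Finset ι} (hs : #s = 3) {d : ι → ℝ}
    (hd : ∀ i ∈ s, |d i| < r / 2) (hsum : ∑ i ∈ s, ((r / 2 + d i : ℝ) : AddCircle r) = 0) :
    ∑ i ∈ s, d i = r / 2 ∨ ∑ i ∈ s, d i = -(r / 2) := by
  have hne : s.Nonempty := Finset.card_pos.1 (by omega)
  have hlt : |∑ i ∈ s, d i| < 3 * (r / 2) :=
    calc |∑ i ∈ s, d i| ≤ ∑ i ∈ s, |d i| := Finset.abs_sum_le_sum_abs _ _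
      _ < ∑ _i ∈ s, r / 2 := Finset.sum_lt_sum_of_nonempty hne hd
      _ = 3 * (r / 2) := by simp [hs]
  have hr : 0 < r := by linarith [abs_nonneg (∑ i ∈ s, d i)]
  obtain ⟨n, hn⟩ : ∃ n : ℤ, n * r = 3 * (r / 2) + ∑ i ∈ s, d i := by
    have hcoe : ((∑ i ∈ s, (r / 2 + d i) : ℝ) : AddCircle r) = 0 :=
      (map_sum (QuotientAddGroup.mk' (AddSubgroup.zmultiples r)) _ _).trans hsum
    obtain ⟨n, hn⟩ := (AddCircle.coe_eq_zero_iff r).1 hcoe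
    exact ⟨n, by rw [← zsmul_eq_mul, hn, Finset.sum_add_distrib]; simp [hs]⟩
  rw [abs_lt] at hlt
  have hn_pos : 0 < n := by
    exact_mod_cast pos_of_mul_pos_left (b := r) (by linarith : (0 : ℝ) < n * r) hr.le
  have hn_lt : n < 3 := by
    exact_mod_cast lt_of_mul_lt_mul_right (by linarith : (n : ℝ) * r < 3 * r) hr.le
  obtain rfl | rfl : n = 1 ∨ n = 2 := by omega
  · right; push_cast at hn; linarith
  · left; push_cast at hn; linarith

variable [Fintype V] [DecidableRel H.Adj]

theorem exists_lift_divergence_eq (hr : 0 < r) (hH : H.IsRegularOfDegree 3)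
    (hφ : IsCirculation H φ) (hne : ∀ ⦃v w⦄, H.Adj v w → φ v w ≠ 0) :
    ∃ D : V → V → ℝ, (∀ ⦃v w⦄, H.Adj v w → D w v = -D v w) ∧
      (∀ v w, |D v w| = r / 2 - ‖φ v w‖) ∧
      ∀ v, ∑ w ∈ H.neighborFinset v, D v w = r / 2 ∨
        ∑ w ∈ H.neighborFinset v, D v w = -(r / 2) := by
  obtain ⟨D, hanti, hDφ, hD⟩ := exists_antisymm_lift hr hφ.antisymm hne
  refine ⟨D, hanti, hD, fun v => sum_eq_or_sum_eq_neg_of_card_eq_three (hH v) (fun w hw => ?_) ?_⟩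
  · rw [hD]
    linarith [norm_pos_iff.2 (hne ((H.mem_neighborFinset v w).1 hw))]
  · simpa only [hDφ] using hφ.sum_neighborFinset v

/-- Every vertex set on one side of the bisection has at least `#X * (r / 2)` units of `D` crossing
its boundary, and an edge of `φ`-norm `x` carries only `r / 2 - x` of them. -/
theorem exists_bisection_sum_norm_le [DecidableEq V] (hr : 0 < r)
    (hH : H.IsRegularOfDegree 3) (hφ : IsCirculation H φ)
    (hne : ∀ ⦃v w⦄, H.Adj v w → φ v w ≠ 0) :
    ∃ S : Finset V, #S = #Sᶜ ∧ ∀ X, X ⊆ S ∨ X ⊆ Sᶜ →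
      ∑ p ∈ H.interedges X Xᶜ, ‖φ p.1 p.2‖ ≤ (#(H.interedges X Xᶜ) - #X) * (r / 2) := by
  obtain ⟨D, hanti, hD, hdiv⟩ := exists_lift_divergence_eq hr hH hφ hne
  obtain ⟨S, hcard, hS⟩ := exists_bisection_card_mul_le_sum_abs (half_pos hr) hanti hdiv
  refine ⟨S, hcard, fun X hX => ?_⟩
  have hle := hS X hX
  simp only [hD, Finset.sum_sub_distrib, Finset.sum_const, nsmul_eq_mul] at hle
  linarith

end ModularFlow

section EdgeCut

variable {V M : Type*} [SeminormedAddCommGroup M] {H : SimpleGraph V} {φ : V → V → M}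
  {u v : V}

theorem norm_eq_norm_of_sym2_eq (hφ : ∀ ⦃v w⦄, H.Adj v w → φ w v = -φ v w) {x y : V}
    (hxy : H.Adj x y) (h : s(x, y) = s(u, v)) : ‖φ x y‖ = ‖φ u v‖ := by
  obtain ⟨rfl, rfl⟩ | ⟨rfl, rfl⟩ := Sym2.eq_iff.1 h
  · rfl
  · rw [hφ hxy, norm_neg]

theorem norm_lt_of_sum_interedges_le [Fintype V] [DecidableEq V] [DecidableRel H.Adj]
    (hφ : ∀ ⦃v w⦄, H.Adj v w → φ w v = -φ v w)
    (hone : ∀ x y, H.Adj x y → s(x, y) ≠ s(u, v) → 1 < ‖φ x y‖) {X : Finset V} {c : ℝ}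
    (hcard : 1 < #(H.interedges X Xᶜ)) (hc : c ≤ #(H.interedges X Xᶜ))
    (hsum : ∑ p ∈ H.interedges X Xᶜ, ‖φ p.1 p.2‖ ≤ c) :
    ‖φ u v‖ < c - (#(H.interedges X Xᶜ) - 1) := by
  set C := H.interedges X Xᶜ
  have hC {p} (hp : p ∈ C) : p.1 ∈ X ∧ p.2 ∉ X ∧ H.Adj p.1 p.2 := by
    simpa using H.mem_interedges_iff.1 hp
  have hlt {T : Finset (V × V)} (hT : T.Nonempty) (hTC : T ⊆ C)
      (hoff : ∀ p ∈ T, s(p.1, p.2) ≠ s(u, v)) : #T < ∑ p ∈ T, ‖φ p.1 p.2‖ := by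
    simpa using Finset.sum_lt_sum_of_nonempty hT fun p hp =>
      hone p.1 p.2 (hC (hTC hp)).2.2 (hoff p hp)
  obtain ⟨p, hpC, hp⟩ : ∃ p ∈ C, s(p.1, p.2) = s(u, v) := by
    by_contra! hoff
    linarith [hlt (Finset.card_pos.1 (by omega)) subset_rfl hoff]
  have hoff (q) (hq : q ∈ C.erase p) : s(q.1, q.2) ≠ s(u, v) := by
    intro hqe
    obtain ⟨hne, hqC⟩ := Finset.mem_erase.1 hq
    obtain ⟨h1, h2⟩ | ⟨h1, -⟩ := Sym2.eq_iff.1 (hqe.trans hp.symm)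
    · exact hne (Prod.ext h1 h2)
    · exact (hC hpC).2.1 (h1 ▸ (hC hqC).1)
  have herase := hlt (Finset.card_pos.1 (by rw [Finset.card_erase_of_mem hpC]; omega))
    (Finset.erase_subset p C) hoff
  rw [Finset.card_erase_of_mem hpC, Nat.cast_sub (by omega), Nat.cast_one] at herase
  rw [← Finset.add_sum_erase C _ hpC, norm_eq_norm_of_sym2_eq hφ (hC hpC).2.2 hp] at hsum
  linarith

end EdgeCut

/-! ### Flows on an orientation of a simple graph -/

theorem units_zsmul_mem {M : Type*} [AddCommGroup M] {S : Set M} (hS : ∀ z ∈ S, -z ∈ S) {z : M}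
    (hz : z ∈ S) (s : ℤˣ) : (s : ℤ) • z ∈ S := by
  rcases Int.units_eq_one_or s with rfl | rfl
  · simpa using hz
  · simpa using hS z hz

theorem units_zsmul_zsmul_self {M : Type*} [AddCommGroup M] (s : ℤˣ) (z : M) :
    (s : ℤ) • (s : ℤ) • z = z := by
  rw [smul_smul, Int.units_coe_mul_self, one_smul]

namespace Multigraph

variable {G : Multigraph} {H : SimpleGraph G.V}

/-- `G` is an orientation of the simple graph `H`: the edges of `G` are those of `H`, each listed
once, in one of its two directions. -/
structure IsOrientationOf (G : Multigraph) (H : SimpleGraph G.V) : Prop where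
  injective_edge : Function.Injective fun e => s(G.src e, G.tgt e)
  adj_iff : ∀ v w, H.Adj v w ↔ ∃ e, s(G.src e, G.tgt e) = s(v, w)

theorem IsOrientationOf.adj (hG : G.IsOrientationOf H) (e : G.E) : H.Adj (G.src e) (G.tgt e) :=
  (hG.adj_iff _ _).2 ⟨e, rfl⟩

variable {M : Type*} [AddCommGroup M]

theorem IsFlow.zsmul {f : G.E → M} (hf : G.IsFlow f) (n : ℤ) : G.IsFlow fun e => n • f e := by
  intro v
  rw [← Finset.smul_sum, ← Finset.smul_sum, hf v]

theorem isFlow_addEdge_deleteEdge_iff {e₀ : G.E} {f : G.E → M} {h : Option {e // e ≠ e₀} → M}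
    (hf : ∀ e, h e = f (Equiv.optionSubtypeNe e₀ e)) :
    ((G.deleteEdge e₀).addEdge (G.src e₀) (G.tgt e₀)).IsFlow h ↔ G.IsFlow f := by
  have hsum (x : G.E → G.V) (y : Option {e // e ≠ e₀} → G.V)
      (hxy : ∀ e, y e = x (Equiv.optionSubtypeNe e₀ e)) (v : G.V) :
      ∑ e with y e = v, h e = ∑ e with x e = v, f e := by
    simp only [hf, hxy, Finset.sum_filter]
    exact Equiv.sum_comp (Equiv.optionSubtypeNe e₀) fun e => if x e = v then f e else 0
  refine forall_congr' fun (v : G.V) => Eq.congr (hsum G.src _ ?_ v) (hsum G.tgt _ ?_ v)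
  all_goals rintro (_ | e) <;> rfl

/-- The total value of `f` from `v` to `w`, edges in the opposite direction counted negatively. -/
def netFlow (f : G.E → M) (v w : G.V) : M :=
  ∑ e with G.src e = v ∧ G.tgt e = w, f e - ∑ e with G.src e = w ∧ G.tgt e = v, f e

theorem IsOrientationOf.netFlow_src_tgt (hG : G.IsOrientationOf H) (f : G.E → M) (e : G.E) :
    netFlow f (G.src e) (G.tgt e) = f e := by
  have hforward : ({e' | G.src e' = G.src e ∧ G.tgt e' = G.tgt e} : Finset G.E) = {e} := by
    ext e'
    simp only [Finset.mem_filter_univ, Finset.mem_singleton]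
    exact ⟨fun h => hG.injective_edge (by simp [h]), by rintro rfl; simp⟩
  have hbackward : ({e' | G.src e' = G.tgt e ∧ G.tgt e' = G.src e} : Finset G.E) = ∅ := by
    refine Finset.filter_eq_empty_iff.2 fun e' _ ⟨hs, ht⟩ => ?_
    obtain rfl : e' = e := hG.injective_edge (by simp [hs, ht, Sym2.eq_swap])
    exact (hG.adj e').ne hs
  rw [netFlow, hforward, hbackward, Finset.sum_singleton, Finset.sum_empty, sub_zero]

theorem IsOrientationOf.sum_neighborFinset [DecidableRel H.Adj] (hG : G.IsOrientationOf H)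
    (v : G.V) (g : G.V → M) :
    ∑ w ∈ H.neighborFinset v, g w =
      ∑ e with G.src e = v, g (G.tgt e) + ∑ e with G.tgt e = v, g (G.src e) := by
  have hnbr : H.neighborFinset v = ({e | G.src e = v} : Finset G.E).image G.tgt ∪
      ({e | G.tgt e = v} : Finset G.E).image G.src := by
    ext w
    simp only [SimpleGraph.mem_neighborFinset, hG.adj_iff, Sym2.eq_iff, Finset.mem_union,
      Finset.mem_image, Finset.mem_filter_univ, exists_or]
    simp only [and_comm]
  have hdisj : Disjoint (({e | G.src e = v} : Finset G.E).image G.tgt)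
      (({e | G.tgt e = v} : Finset G.E).image G.src) := by
    simp only [Finset.disjoint_left, Finset.mem_image, Finset.mem_filter_univ, not_exists, not_and]
    rintro _ ⟨e, rfl, rfl⟩ e' ht hs
    obtain rfl : e' = e := hG.injective_edge (by simp [hs, ht, Sym2.eq_swap])
    exact (hG.adj e').ne hs
  rw [hnbr, Finset.sum_union hdisj, Finset.sum_image, Finset.sum_image]
  all_goals
    intro e he e' he' h
    rw [Finset.mem_coe, Finset.mem_filter_univ] at he he'
    exact hG.injective_edge (by simp [he, he', h])

theorem IsOrientationOf.isFlow_iff [DecidableRel H.Adj] (hG : G.IsOrientationOf H)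
    {φ : G.V → G.V → M} (hφ : ∀ ⦃v w⦄, H.Adj v w → φ w v = -φ v w) :
    G.IsFlow (fun e => φ (G.src e) (G.tgt e)) ↔ IsCirculation H φ := by
  have hsum (v : G.V) : ∑ w ∈ H.neighborFinset v, φ v w =
      ∑ e with G.src e = v, φ (G.src e) (G.tgt e) -
        ∑ e with G.tgt e = v, φ (G.src e) (G.tgt e) := by
    rw [hG.sum_neighborFinset, sub_eq_add_neg, ← Finset.sum_neg_distrib]
    congr 1
    · exact Finset.sum_congr rfl fun e he => by rw [(Finset.mem_filter.1 he).2]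
    · exact Finset.sum_congr rfl fun e he => by rw [← hφ (hG.adj e), (Finset.mem_filter.1 he).2]
  have hiff : G.IsFlow (fun e => φ (G.src e) (G.tgt e)) ↔
      ∀ v, ∑ w ∈ H.neighborFinset v, φ v w = 0 :=
    forall_congr' fun v => by rw [hsum, sub_eq_zero]
  exact ⟨fun h => ⟨hφ, hiff.1 h⟩, fun h => hiff.2 h.sum_neighborFinset⟩

theorem IsOrientationOf.isCirculation_netFlow [DecidableRel H.Adj] (hG : G.IsOrientationOf H)
    {f : G.E → M} (hf : G.IsFlow f) : IsCirculation H (netFlow f) := by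
  refine (hG.isFlow_iff (φ := netFlow f) fun _ _ _ => (neg_sub _ _).symm).1 ?_
  rwa [funext (hG.netFlow_src_tgt f)]

theorem IsOrientationOf.netFlow_mem (hG : G.IsOrientationOf H) {S : Set M} (hS : ∀ z ∈ S, -z ∈ S)
    {f : G.E → M} {e : G.E} (he : f e ∈ S) {v w : G.V} (hvw : s(G.src e, G.tgt e) = s(v, w)) :
    netFlow f v w ∈ S := by
  obtain ⟨rfl, rfl⟩ | ⟨rfl, rfl⟩ := Sym2.eq_iff.1 hvw
  · rwa [hG.netFlow_src_tgt]
  · rw [show netFlow f (G.tgt e) (G.src e) = -netFlow f (G.src e) (G.tgt e) from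
      (neg_sub _ _).symm, hG.netFlow_src_tgt]
    exact hS _ he

theorem exists_isFlow_of_mem_CPcap_deleteEdge {r : ℝ} {S : Set (AddCircle r)}
    (hS : ∀ z ∈ S, -z ∈ S) {e₀ : G.E} {t : AddCircle r}
    (ht : t ∈ CPcap r (G.deleteEdge e₀) (fun _ => S) (G.src e₀) (G.tgt e₀)) :
    ∃ g : G.E → AddCircle r, G.IsFlow g ∧ g e₀ = t ∧ ∀ e ≠ e₀, g e ∈ S := by
  obtain ⟨σ, f, hflow, hcap, rfl⟩ := ht
  let h : Option {e // e ≠ e₀} → AddCircle r := fun e => (σ none : ℤ) • (σ e : ℤ) • f e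
  refine ⟨h ∘ (Equiv.optionSubtypeNe e₀).symm, ?_, ?_, fun e he => ?_⟩
  · refine (isFlow_addEdge_deleteEdge_iff fun e => ?_).1 (IsFlow.zsmul hflow (σ none))
    rw [Function.comp_apply, Equiv.symm_apply_apply]
  · rw [Function.comp_apply, Equiv.optionSubtypeNe_symm_self]
    exact units_zsmul_zsmul_self (σ none) (f none)
  · rw [Function.comp_apply, Equiv.optionSubtypeNe_symm_of_ne he]
    exact units_zsmul_mem hS (units_zsmul_mem hS (hcap ⟨e, he⟩) _) _

/-- Capacities that are symmetric about `0` make the orientations irrelevant. -/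
theorem IsOrientationOf.mem_CPcap_deleteEdge_iff [DecidableRel H.Adj] (hG : G.IsOrientationOf H)
    {r : ℝ} {S : Set (AddCircle r)} (hS : ∀ z ∈ S, -z ∈ S) {e₀ : G.E} {t : AddCircle r} :
    t ∈ CPcap r (G.deleteEdge e₀) (fun _ => S) (G.src e₀) (G.tgt e₀) ↔
      ∃ φ, IsCirculation H φ ∧ φ (G.src e₀) (G.tgt e₀) = t ∧
        ∀ v w, H.Adj v w → s(v, w) ≠ s(G.src e₀, G.tgt e₀) → φ v w ∈ S := by
  constructor
  · intro ht
    obtain ⟨g, hg, rfl, hcap⟩ := exists_isFlow_of_mem_CPcap_deleteEdge hS ht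
    refine ⟨netFlow g, hG.isCirculation_netFlow hg, hG.netFlow_src_tgt g e₀, fun v w hvw hne => ?_⟩
    obtain ⟨e, he⟩ := (hG.adj_iff v w).1 hvw
    exact hG.netFlow_mem hS (hcap e fun h => hne (by rw [← he, h])) he
  · rintro ⟨φ, hφ, rfl, hcap⟩
    refine ⟨1, (fun e => φ (G.src e) (G.tgt e)) ∘ Equiv.optionSubtypeNe e₀, ?_, fun e => ?_, rfl⟩
    · exact (isFlow_addEdge_deleteEdge_iff fun e => one_smul ℤ _).2
        ((hG.isFlow_iff hφ.antisymm).2 hφ)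
    · exact hcap _ _ (hG.adj e.1) fun h => e.2 (hG.injective_edge h)

end Multigraph

theorem CP_eq_CPcap_setOf_one_lt_norm {r : ℝ} (hr : 2 < r) (G : Multigraph) (u v : G.V) :
    CP r G u v = CPcap r G (fun _ => {z | 1 < ‖z‖}) u v := by
  rw [CP, openArc_eq_setOf_lt_norm zero_le_one (by linarith)]

/-! ### The Petersen graph -/

/-- The Petersen graph as a simple graph. -/
def petersenGraph : SimpleGraph petersen.V where
  Adj v w := Disjoint v.1 w.1
  symm := ⟨fun _ _ h => Disjoint.symm h⟩
  loopless := ⟨by decide⟩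

instance : DecidableRel petersenGraph.Adj := fun v w =>
  inferInstanceAs (Decidable (Disjoint v.1 w.1))

theorem petersen_isOrientationOf_petersenGraph : petersen.IsOrientationOf petersenGraph where
  injective_edge := by decide +kernel
  adj_iff := by decide +kernel

namespace petersenGraph

theorem isRegularOfDegree_three : petersenGraph.IsRegularOfDegree 3 :=
  show ∀ v, petersenGraph.degree v = 3 by decide +kernel

/-- By hand: if each vertex had at most one neighbour on its own side, then, as `#S = 5` is odd,
some `v ∈ S` would have none. The non-neighbours of `v` form a hexagon with four vertices in `S`, so
its two vertices outside `S` are opposite; but these have a common neighbour, which is a neighbour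
of `v` and hence outside `S` as well. -/
theorem exists_one_lt_card_neighborFinset_same_side (S : Finset petersen.V) (hS : #S = #Sᶜ) :
    ∃ v, 1 < #{w ∈ petersenGraph.neighborFinset v | w ∈ S ↔ v ∈ S} := by
  revert S
  decide +kernel

theorem card_interedges_path {v w₁ w₂ : petersen.V} (h₁ : petersenGraph.Adj v w₁)
    (h₂ : petersenGraph.Adj v w₂) (hne : w₁ ≠ w₂) :
    #(petersenGraph.interedges {v, w₁, w₂} {v, w₁, w₂}ᶜ) = 5 := by
  revert v w₁ w₂
  decide +kernel

theorem exists_one_sided_card_eq_three_card_interedges_eq_five (S : Finset petersen.V)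
    (hS : #S = #Sᶜ) :
    ∃ X, (X ⊆ S ∨ X ⊆ Sᶜ) ∧ #X = 3 ∧ #(petersenGraph.interedges X Xᶜ) = 5 := by
  obtain ⟨v, hv⟩ := exists_one_lt_card_neighborFinset_same_side S hS
  obtain ⟨w₁, h₁, w₂, h₂, hne⟩ := Finset.one_lt_card.1 hv
  rw [Finset.mem_filter, SimpleGraph.mem_neighborFinset] at h₁ h₂
  refine ⟨{v, w₁, w₂}, ?_, Finset.card_eq_three.2 ⟨v, w₁, w₂, h₁.1.ne, h₂.1.ne, hne, rfl⟩,
    card_interedges_path h₁.1 h₂.1 hne⟩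
  by_cases hvS : v ∈ S <;> simp [Finset.insert_subset_iff, h₁.2, h₂.2, hvS]

theorem norm_lt_of_isCirculation {r : ℝ} (h4 : 4 < r) (h5 : r ≤ 5)
    {φ : petersen.V → petersen.V → AddCircle r} (hφ : IsCirculation petersenGraph φ)
    {u v : petersen.V}
    (hone : ∀ x y, petersenGraph.Adj x y → s(x, y) ≠ s(u, v) → 1 < ‖φ x y‖) :
    ‖φ u v‖ < r - 4 := by
  rcases eq_or_ne ‖φ u v‖ 0 with h0 | h0
  · linarith
  have hne (x y) (hxy : petersenGraph.Adj x y) : φ x y ≠ 0 := by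
    refine norm_ne_zero_iff.1 ?_
    by_cases hedge : s(x, y) = s(u, v)
    · rwa [norm_eq_norm_of_sym2_eq hφ.antisymm hxy hedge]
    · exact (one_pos.trans (hone x y hxy hedge)).ne'
  obtain ⟨S, hS, hcut⟩ :=
    exists_bisection_sum_norm_le (by linarith) isRegularOfDegree_three hφ hne
  obtain ⟨X, hXS, hX, hC⟩ := exists_one_sided_card_eq_three_card_interedges_eq_five S hS
  have hsum := hcut X hXS
  rw [hX, hC] at hsum
  calc ‖φ u v‖ < r - (#(petersenGraph.interedges X Xᶜ) - 1) :=
        norm_lt_of_sum_interedges_le hφ.antisymm hone (by rw [hC]; norm_num)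
          (by rw [hC]; exact_mod_cast h5) (hsum.trans_eq (by push_cast; ring))
    _ = r - 4 := by rw [hC]; norm_num

/-- The index of the cell containing `w` in the partition `{u}`, `{v}`, `N(u) \ {v}`, `N(v) \ {u}`,
rest of the vertices of the Petersen graph, for an edge `uv`. -/
def edgeCell (u v w : petersen.V) : Fin 5 :=
  if w = u then 0
  else if w = v then 1
  else if petersenGraph.Adj u w then 2
  else if petersenGraph.Adj v w then 3
  else 4

/-- The quotient matrix of the partition `edgeCell`: every vertex of cell `i` has
`edgeCellMatrix i j` neighbours in cell `j`. -/
def edgeCellMatrix : Fin 5 → Fin 5 → ℕ :=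
  ![![0, 1, 2, 0, 0],
    ![1, 0, 0, 2, 0],
    ![1, 0, 0, 0, 2],
    ![0, 1, 0, 0, 2],
    ![0, 0, 1, 1, 1]]

theorem card_filter_edgeCell_eq {u v : petersen.V} (huv : petersenGraph.Adj u v) (w : petersen.V)
    (j : Fin 5) : #{x ∈ petersenGraph.neighborFinset w | edgeCell u v x = j} =
      edgeCellMatrix (edgeCell u v w) j := by
  revert u v w j
  decide +kernel

theorem edgeCellMatrix_ne_zero {u v x y : petersen.V} (huv : petersenGraph.Adj u v)
    (hxy : petersenGraph.Adj x y) : edgeCellMatrix (edgeCell u v x) (edgeCell u v y) ≠ 0 := by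
  rw [← card_filter_edgeCell_eq huv]
  exact Finset.card_ne_zero_of_mem
    (Finset.mem_filter.2 ⟨(petersenGraph.mem_neighborFinset x y).2 hxy, rfl⟩)

theorem edgeCell_eq_zero_iff {u v w : petersen.V} : edgeCell u v w = 0 ↔ w = u := by
  unfold edgeCell
  split_ifs <;> simp_all

theorem edgeCell_eq_one_iff {u v w : petersen.V} (huv : u ≠ v) : edgeCell u v w = 1 ↔ w = v := by
  unfold edgeCell
  split_ifs <;> simp_all

/-- The real values, from cell to cell, of a flow modulo `r` on the Petersen graph with value `s` on
the edge joining cells `0` and `1`. At `s = 0` the other edges at `u` and `v` and those inside cell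
`4` carry `r / 2`, and the edges into cell `4` carry `r / 4`; in general, `s / 4` is added along
each of the four 5-cycles through `uv`. -/
noncomputable def edgeCellFlow (r s : ℝ) : Fin 5 → Fin 5 → ℝ :=
  ![![0, s, (r - s) / 2, 0, 0],
    ![-s, 0, 0, (r + s) / 2, 0],
    ![-((r - s) / 2), 0, 0, 0, (r - s) / 4],
    ![0, -((r + s) / 2), 0, 0, (r + s) / 4],
    ![0, 0, -((r - s) / 4), -((r + s) / 4), r / 2]]

section EdgeCellFlow

variable {r s : ℝ}

theorem coe_edgeCellFlow_swap (i j : Fin 5) :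
    (edgeCellFlow r s j i : AddCircle r) = -(edgeCellFlow r s i j : AddCircle r) := by
  have hhalf : ((r / 2 : ℝ) : AddCircle r) = -((r / 2 : ℝ) : AddCircle r) := by
    rw [eq_neg_iff_add_eq_zero, ← AddCircle.coe_add, add_halves, AddCircle.coe_period]
  fin_cases i <;> fin_cases j <;> simp [edgeCellFlow, ← hhalf]

theorem sum_edgeCellMatrix_mul_edgeCellFlow (i : Fin 5) :
    ∑ j, edgeCellMatrix i j * edgeCellFlow r s i j = ![r, r, 0, 0, 0] i := by
  fin_cases i <;> simp [edgeCellMatrix, edgeCellFlow, Fin.sum_univ_five] <;> ring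

theorem sum_edgeCellMatrix_nsmul_coe_edgeCellFlow (i : Fin 5) :
    ∑ j, edgeCellMatrix i j • (edgeCellFlow r s i j : AddCircle r) = 0 := by
  have h := congrArg (QuotientAddGroup.mk' (AddSubgroup.zmultiples r))
    (sum_edgeCellMatrix_mul_edgeCellFlow (r := r) (s := s) i)
  simp only [← nsmul_eq_mul, map_sum, map_nsmul] at h
  refine h.trans ?_
  fin_cases i <;> simp

theorem one_lt_norm_coe_edgeCellFlow (h4 : 4 < r) (hs : |s| < r - 4) {i j : Fin 5}
    (hadj : edgeCellMatrix i j ≠ 0) (hne : s(i, j) ≠ s(0, 1)) :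
    1 < ‖(edgeCellFlow r s i j : AddCircle r)‖ := by
  obtain ⟨hs₁, hs₂⟩ := abs_lt.1 hs
  suffices ∃ x ∈ Set.Ioo 1 (r - 1), edgeCellFlow r s i j = x ∨ edgeCellFlow r s i j = -x by
    obtain ⟨x, hx, h | h⟩ := this
    · exact h ▸ lt_norm_coe hx
    · rw [h, AddCircle.coe_neg, norm_neg]
      exact lt_norm_coe hx
  fin_cases i <;> fin_cases j
  any_goals first | exact absurd rfl hadj | exact absurd rfl hne | exact absurd Sym2.eq_swap hne
  · exact ⟨(r - s) / 2, ⟨by linarith, by linarith⟩, Or.inl rfl⟩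
  · exact ⟨(r + s) / 2, ⟨by linarith, by linarith⟩, Or.inl rfl⟩
  · exact ⟨(r - s) / 2, ⟨by linarith, by linarith⟩, Or.inr rfl⟩
  · exact ⟨(r - s) / 4, ⟨by linarith, by linarith⟩, Or.inl rfl⟩
  · exact ⟨(r + s) / 2, ⟨by linarith, by linarith⟩, Or.inr rfl⟩
  · exact ⟨(r + s) / 4, ⟨by linarith, by linarith⟩, Or.inl rfl⟩
  · exact ⟨(r - s) / 4, ⟨by linarith, by linarith⟩, Or.inr rfl⟩
  · exact ⟨(r + s) / 4, ⟨by linarith, by linarith⟩, Or.inr rfl⟩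
  · exact ⟨r / 2, ⟨by linarith, by linarith⟩, Or.inl rfl⟩

end EdgeCellFlow

theorem exists_isCirculation_of_norm_lt {r : ℝ} (h4 : 4 < r) {u v : petersen.V}
    (huv : petersenGraph.Adj u v) {z : AddCircle r} (hz : ‖z‖ < r - 4) :
    ∃ φ, IsCirculation petersenGraph φ ∧ φ u v = z ∧
      ∀ x y, petersenGraph.Adj x y → s(x, y) ≠ s(u, v) → 1 < ‖φ x y‖ := by
  obtain ⟨s, rfl, hs⟩ := exists_coe_eq_and_abs_eq_norm z
  rw [← hs] at hz
  refine ⟨_, isCirculation_of_quotientMatrix (card_filter_edgeCell_eq huv)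
    (coe_edgeCellFlow_swap (s := s)) sum_edgeCellMatrix_nsmul_coe_edgeCellFlow, ?_,
    fun x y hxy hne => ?_⟩
  · rw [edgeCell_eq_zero_iff.2 rfl, (edgeCell_eq_one_iff huv.ne).2 rfl]
    rfl
  · refine one_lt_norm_coe_edgeCellFlow h4 hz (edgeCellMatrix_ne_zero huv hxy) fun h => hne ?_
    simpa only [Sym2.eq_iff, edgeCell_eq_zero_iff, edgeCell_eq_one_iff huv.ne] using h

end petersenGraph

theorem petersen_minus_edge_r_capacity_general (r : ℝ) (h4 : 4 < r) (h5 : r ≤ 5)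
    (e₀ : petersen.E) :
    CP r (petersen.deleteEdge e₀) (petersen.src e₀) (petersen.tgt e₀) = openArc r 4 (r - 4) := by
  rw [openArc_eq_ball (by linarith) (by linarith)]
  refine (CP_eq_CPcap_setOf_one_lt_norm (by linarith) _ _ _).trans (Set.ext fun z => ?_)
  rw [mem_ball_zero_iff]
  refine (petersen_isOrientationOf_petersenGraph.mem_CPcap_deleteEdge_iff (by simp)).trans
    ⟨?_, petersenGraph.exists_isCirculation_of_norm_lt h4
      (petersen_isOrientationOf_petersenGraph.adj e₀)⟩
  rintro ⟨φ, hφ, rfl, hone⟩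
  exact petersenGraph.norm_lt_of_isCirculation h4 h5 hφ hone

/-- For every rational `r` with `4 < r < 5`, the open
`r`-capacity of the g-edge `P*₁₀(u,v)`, obtained from the Petersen graph by
deleting one edge `uv`, equals the open interval `(4, r-4)` of `ℝ/rℤ`. -/
theorem petersen_minus_edge_r_capacity (r : ℚ) (h4 : 4 < r) (h5 : r < 5)
    (e₀ : petersen.E) :
    CP (r : ℝ) (petersen.deleteEdge e₀) (petersen.src e₀) (petersen.tgt e₀)
      = openArc (r : ℝ) 4 ((r : ℝ) - 4) :=
  petersen_minus_edge_r_capacity_general r (by exact_mod_cast h4) (by exact_mod_cast h5.le) e₀
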